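/- For all w, v ∈ ℌ⁰ the dual stuffle product equals the generalized quasi-shuffle product ⧢_Sh: τ(τ(w) * τ(v)) = w ⧢_Sh v, where ⧢_Sh is the generalized quasi-shuffle product on ℌ = ℚ⟨x,y⟩ associated to the ℚ-bilinear map ⋄_Sh with x⋄_Shx = xy, x⋄_Shy = y⋄_Shx = −xy, y⋄_Shy = −yy. -/

import Mathlib

/-!
The letter `y` is central-like for `⧢_Sh`: induction on one argument gives
`y w ⧢_Sh v = y (w ⧢_Sh v) = w ⧢_Sh y v`, because in the defining recursion the remaining shuffle
term cancels against the `⋄_Sh` term. With `d_k = τ(z_k) = x y^{k-1}`, the recursion at two leading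
letters `x`, for which `x ⋄_Sh x = xy`, therefore becomes
`d_i w ⧢_Sh d_j v = d_i (w ⧢_Sh d_j v) + d_j (d_i w ⧢_Sh v) + d_{i+j} (w ⧢_Sh v)`.

On the other side the stuffle product also satisfies its recursion at the last letters,
`w z_i * v z_j = (w * v z_j) z_i + (w z_i * v) z_j + (w * v) z_{i+j}`,
and the anti-automorphism `τ` turns it into the recursion above. Hence
`τ(w * v) = τ(w) ⧢_Sh τ(v)` for all words in the `z_k`, by induction from the right. As `τ` is an
involution mapping admissible words to words in the `z_k`, the theorem follows by bilinearity.
-/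

/- STATEMENT 19 (Corollary): For all w, v ∈ ℌ⁰ the dual stuffle product equals
the generalized quasi-shuffle product ⧢_Sh: τ(τ(w) * τ(v)) = w ⧢_Sh v, where
ℌ = ℚ⟨x,y⟩, * is the stuffle product on ℌ¹ = ℚ⟨z₁,z₂,…⟩ (z_k = x^{k-1}y),
τ is the anti-automorphism exchanging x and y, and ⧢_Sh is the generalized
quasi-shuffle product associated to ⋄_Sh with x⋄_Sh x = xy,
x⋄_Sh y = y⋄_Sh x = −xy, y⋄_Sh y = −yy. -/

noncomputable section

/-- The two letters x, y of ℌ = ℚ⟨x,y⟩. -/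
inductive XY : Type
  | x : XY
  | y : XY
  deriving DecidableEq

/-- A word in the letters x, y as an element of ℌ = ℚ⟨x,y⟩. -/
def ofW (w : List XY) : MonoidAlgebra ℚ (FreeMonoid XY) :=
  MonoidAlgebra.of ℚ (FreeMonoid XY) (FreeMonoid.ofList w)

/-- Exchanging the letters x and y. -/
def swapXY : XY → XY
  | XY.x => XY.y
  | XY.y => XY.x

/-- The word z_{k₁}⋯z_{k_r} ∈ ℌ, where z_k = x^{k-1}y. -/
def zWord (l : List ℕ+) : List XY :=
  (l.map fun k => List.replicate ((k : ℕ) - 1) XY.x ++ [XY.y]).flatten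

/-- The values of ⋄_Sh on the letters. -/
def dSh : XY → XY → MonoidAlgebra ℚ (FreeMonoid XY)
  | XY.x, XY.x => ofW [XY.x, XY.y]
  | XY.x, XY.y => -ofW [XY.x, XY.y]
  | XY.y, XY.x => -ofW [XY.x, XY.y]
  | XY.y, XY.y => -ofW [XY.y, XY.y]

/-- The index list (k₁,…,k_r) is admissible: either empty or k₁ ≥ 2. -/
def Admissible (l : List ℕ+) : Prop := ∀ h : l ≠ [], 2 ≤ (l.head h : ℕ)

/-- ℌ⁰ = ℚ + xℌy, the span of 𝟏 and the words z_{k₁}⋯z_{k_r} with k₁ ≥ 2. -/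
def H0 : Submodule ℚ (MonoidAlgebra ℚ (FreeMonoid XY)) :=
  Submodule.span ℚ {t | ∃ l : List ℕ+, Admissible l ∧ t = ofW (zWord l)}

/-! ### Words and duality -/

lemma ofW_append (u v : List XY) : ofW (u ++ v) = ofW u * ofW v := by
  simp [ofW, FreeMonoid.ofList_append]

lemma ofW_cons (a : XY) (v : List XY) : ofW (a :: v) = ofW [a] * ofW v :=
  ofW_append [a] v

lemma ofW_nil : ofW [] = 1 := rfl

lemma zWord_append (l m : List ℕ+) : zWord (l ++ m) = zWord l ++ zWord m := by
  simp [zWord]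

lemma zWord_cons (k : ℕ+) (l : List ℕ+) : zWord (k :: l) = zWord [k] ++ zWord l :=
  zWord_append [k] l

lemma zWord_nil : zWord [] = [] := rfl

/-- The word `τ(u)`: letters exchanged and order reversed. -/
def dualWord (u : List XY) : List XY := (u.map swapXY).reverse

lemma swapXY_swapXY (a : XY) : swapXY (swapXY a) = a := by
  cases a <;> rfl

lemma dualWord_dualWord (u : List XY) : dualWord (dualWord u) = u := by
  simp [dualWord, Function.comp_def, swapXY_swapXY]

lemma dualWord_append (u v : List XY) : dualWord (u ++ v) = dualWord v ++ dualWord u := by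
  simp [dualWord]

/-- `τ(z_k) = x y^{k-1}`. -/
lemma dualWord_zWord_singleton (k : ℕ+) :
    dualWord (zWord [k]) = XY.x :: List.replicate ((k : ℕ) - 1) XY.y := by
  simp [dualWord, zWord, swapXY]

/-- Every word ending in `y` is a nonempty word in the `z_k`. -/
lemma exists_zWord (u : List XY) : ∃ (k : ℕ+) (m : List ℕ+), u ++ [XY.y] = zWord (k :: m) := by
  induction u with
  | nil => exact ⟨1, [], by simp [zWord]⟩
  | cons a u ih =>
    obtain ⟨k, m, h⟩ := ih
    cases a with
    | x =>
      refine ⟨k + 1, m, ?_⟩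
      obtain ⟨n, hn⟩ : ∃ n, (k : ℕ) = n + 1 := ⟨k - 1, by have := k.pos; omega⟩
      rw [List.cons_append, h]
      simp [zWord, hn, List.replicate_succ]
    | y =>
      refine ⟨1, k :: m, ?_⟩
      rw [List.cons_append, h]
      simp [zWord]

/-- `τ` maps admissible words to words in the `z_k`. -/
lemma exists_dualWord_eq_zWord (l : List ℕ+) (hl : Admissible l) :
    ∃ m, dualWord (zWord l) = zWord m := by
  cases l with
  | nil => exact ⟨[], rfl⟩
  | cons k l =>
    have hk : 2 ≤ (k : ℕ) := hl (List.cons_ne_nil k l)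
    obtain ⟨n, hn⟩ : ∃ n, (k : ℕ) = n + 2 := ⟨k - 2, by omega⟩
    obtain ⟨j, m, h⟩ := exists_zWord (dualWord (List.replicate n XY.x ++ [XY.y] ++ zWord l))
    refine ⟨j :: m, ?_⟩
    rw [← h, zWord_cons]
    simp [zWord, dualWord, hn, List.replicate_succ, swapXY]

lemma tau_mul_ofW
    (tau : MonoidAlgebra ℚ (FreeMonoid XY) →ₗ[ℚ] MonoidAlgebra ℚ (FreeMonoid XY))
    (htau : ∀ w : List XY, tau (ofW w) = ofW (dualWord w))
    (t : MonoidAlgebra ℚ (FreeMonoid XY)) (u : List XY) :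
    tau (t * ofW u) = ofW (dualWord u) * tau t := by
  induction t using MonoidAlgebra.induction_on with
  | of w =>
    change tau (ofW w.toList * ofW u) = _ * tau (ofW w.toList)
    rw [← ofW_append, htau, htau, dualWord_append, ofW_append]
  | add a b ha hb => simp only [add_mul, mul_add, map_add, ha, hb]
  | smul r a ha => simp only [smul_mul_assoc, mul_smul_comm, map_smul, ha]

/-! ### The stuffle product at the last letters -/

section Stuffle

variable (st : MonoidAlgebra ℚ (FreeMonoid XY) →ₗ[ℚ]
    MonoidAlgebra ℚ (FreeMonoid XY) →ₗ[ℚ] MonoidAlgebra ℚ (FreeMonoid XY))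

/-- The recursion of the stuffle product at the last letters. -/
lemma stuffle_concat
    (hst_one : ∀ t, st 1 t = t) (hst_one' : ∀ t, st t 1 = t)
    (hst : ∀ (i j : ℕ+) (w v : List ℕ+),
      st (ofW (zWord (i :: w))) (ofW (zWord (j :: v))) =
        ofW (zWord [i]) * st (ofW (zWord w)) (ofW (zWord (j :: v)))
        + ofW (zWord [j]) * st (ofW (zWord (i :: w))) (ofW (zWord v))
        + ofW (zWord [i + j]) * st (ofW (zWord w)) (ofW (zWord v)))
    (i j : ℕ+) (a b : List ℕ+) :
    st (ofW (zWord (a ++ [i]))) (ofW (zWord (b ++ [j]))) =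
      st (ofW (zWord a)) (ofW (zWord (b ++ [j]))) * ofW (zWord [i])
      + st (ofW (zWord (a ++ [i]))) (ofW (zWord b)) * ofW (zWord [j])
      + st (ofW (zWord a)) (ofW (zWord b)) * ofW (zWord [i + j]) := by
  have hnil : ofW (zWord []) = 1 := ofW_nil
  have happ (l m : List ℕ+) : ofW (zWord (l ++ m)) = ofW (zWord l) * ofW (zWord m) := by
    rw [zWord_append, ofW_append]
  have hcons (k : ℕ+) (m : List ℕ+) : ofW (zWord (k :: m)) = ofW (zWord [k]) * ofW (zWord m) :=
    happ [k] m
  induction a generalizing b with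
  | nil =>
    induction b with
    | nil =>
      have h := hst i j [] []
      simp only [List.nil_append, hnil, hst_one, hst_one', mul_one, one_mul] at h ⊢
      rw [h]; abel
    | cons q b ih =>
      have h1 := hst i q [] (b ++ [j])
      have h2 := hst i q [] b
      simp only [List.nil_append, List.cons_append, hnil, hst_one] at h1 h2 ih ⊢
      rw [h1, h2, ih, hcons q (b ++ [j]), hcons q b, happ b]
      simp only [mul_add, add_mul, mul_assoc]
      abel
  | cons p a iha =>
    induction b with
    | nil =>
      have h1 := hst p j (a ++ [i]) []
      have h2 := hst p j a []
      have h3 := iha []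
      simp only [List.nil_append, List.cons_append, hnil, hst_one'] at h1 h2 h3 ⊢
      rw [h1, h2, h3, hcons p (a ++ [i]), hcons p a, happ a]
      simp only [mul_add, add_mul, mul_assoc]
      abel
    | cons q b ihb =>
      have h3 := iha (q :: b)
      have h4 := iha b
      simp only [List.cons_append] at ihb h3 h4 ⊢
      rw [hst p q (a ++ [i]) (b ++ [j]), hst p q a (b ++ [j]), hst p q (a ++ [i]) b, hst p q a b,
        ihb, h3, h4]
      simp only [mul_add, add_mul, mul_assoc]
      abel

end Stuffle

/-! ### The generalized quasi-shuffle product on blocks `x y^{k-1}` -/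

section QuasiShuffle

variable (sh : MonoidAlgebra ℚ (FreeMonoid XY) →ₗ[ℚ]
    MonoidAlgebra ℚ (FreeMonoid XY) →ₗ[ℚ] MonoidAlgebra ℚ (FreeMonoid XY))

/-- A leading `y` of the left factor can be pulled out: the term `β (y w ⧢_Sh v)` cancels against
the `⋄_Sh` term by induction. -/
lemma sh_y_left
    (hsh_one' : ∀ t, sh t 1 = t)
    (hsh : ∀ (α β : XY) (w v : List XY),
      sh (ofW (α :: w)) (ofW (β :: v)) =
        ofW [α] * sh (ofW w) (ofW (β :: v))
        + ofW [β] * sh (ofW (α :: w)) (ofW v)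
        + dSh α β * sh (ofW w) (ofW v))
    (w v : List XY) :
    sh (ofW (XY.y :: w)) (ofW v) = ofW [XY.y] * sh (ofW w) (ofW v) := by
  induction v with
  | nil => rw [ofW_nil, hsh_one', hsh_one', ofW_cons]
  | cons b v ih =>
    rw [hsh, ih]
    cases b <;> simp only [dSh] <;> rw [ofW_cons _ [XY.y]] <;> simp only [neg_mul, mul_assoc] <;>
      abel

lemma sh_y_right
    (hsh_one : ∀ t, sh 1 t = t)
    (hsh : ∀ (α β : XY) (w v : List XY),
      sh (ofW (α :: w)) (ofW (β :: v)) =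
        ofW [α] * sh (ofW w) (ofW (β :: v))
        + ofW [β] * sh (ofW (α :: w)) (ofW v)
        + dSh α β * sh (ofW w) (ofW v))
    (w v : List XY) :
    sh (ofW w) (ofW (XY.y :: v)) = ofW [XY.y] * sh (ofW w) (ofW v) := by
  induction w with
  | nil => rw [ofW_nil, hsh_one, hsh_one, ofW_cons]
  | cons a w ih =>
    rw [hsh, ih]
    cases a <;> simp only [dSh] <;> rw [ofW_cons _ [XY.y]] <;> simp only [neg_mul, mul_assoc] <;>
      abel

/-- The recursion of `⧢_Sh` at leading blocks `d_k = τ(z_k) = x y^{k-1}`. -/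
lemma sh_dual_block
    (hsh_one : ∀ t, sh 1 t = t) (hsh_one' : ∀ t, sh t 1 = t)
    (hsh : ∀ (α β : XY) (w v : List XY),
      sh (ofW (α :: w)) (ofW (β :: v)) =
        ofW [α] * sh (ofW w) (ofW (β :: v))
        + ofW [β] * sh (ofW (α :: w)) (ofW v)
        + dSh α β * sh (ofW w) (ofW v))
    (i j : ℕ+) (w v : List XY) :
    sh (ofW (dualWord (zWord [i]) ++ w)) (ofW (dualWord (zWord [j]) ++ v)) =
      ofW (dualWord (zWord [i])) * sh (ofW w) (ofW (dualWord (zWord [j]) ++ v))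
      + ofW (dualWord (zWord [j])) * sh (ofW (dualWord (zWord [i]) ++ w)) (ofW v)
      + ofW (dualWord (zWord [i + j])) * sh (ofW w) (ofW v) := by
  have hl (n : ℕ) (w v : List XY) : sh (ofW (List.replicate n XY.y ++ w)) (ofW v) =
      ofW (List.replicate n XY.y) * sh (ofW w) (ofW v) := by
    induction n with
    | zero => simp [ofW_nil]
    | succ n ih =>
      rw [List.replicate_succ, List.cons_append, sh_y_left sh hsh_one' hsh, ih, ofW_cons _
        (List.replicate n _), mul_assoc]
  have hr (n : ℕ) (w v : List XY) : sh (ofW w) (ofW (List.replicate n XY.y ++ v)) =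
      ofW (List.replicate n XY.y) * sh (ofW w) (ofW v) := by
    induction n with
    | zero => simp [ofW_nil]
    | succ n ih =>
      rw [List.replicate_succ, List.cons_append, sh_y_right sh hsh_one hsh, ih, ofW_cons _
        (List.replicate n _), mul_assoc]
  -- `d_{i+j} = xy · y^{i-1} · y^{j-1}`
  have hij : dualWord (zWord [i + j]) = [XY.x, XY.y] ++
      (List.replicate ((i : ℕ) - 1) XY.y ++ List.replicate ((j : ℕ) - 1) XY.y) := by
    rw [dualWord_zWord_singleton, List.replicate_append_replicate]
    have h : ((i + j : ℕ+) : ℕ) - 1 = ((i : ℕ) - 1 + ((j : ℕ) - 1)) + 1 := by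
      have := i.pos
      have := j.pos
      rw [PNat.add_coe]
      omega
    rw [h, List.replicate_succ]
    rfl
  rw [hij, dualWord_zWord_singleton, dualWord_zWord_singleton, List.cons_append, List.cons_append,
    hsh, hl, hr, hl, hr, ofW_append, ofW_append, ofW_cons _ (List.replicate ((i : ℕ) - 1) _),
    ofW_cons _ (List.replicate ((j : ℕ) - 1) _)]
  simp only [dSh, mul_assoc]

end QuasiShuffle

/-! ### Comparison of the two products -/

theorem dual_stuffle_eq_generalized_quasi_shuffle
    -- τ : the ℚ-linear anti-automorphism of ℌ with τ(x) = y, τ(y) = x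
    (tau : MonoidAlgebra ℚ (FreeMonoid XY) →ₗ[ℚ] MonoidAlgebra ℚ (FreeMonoid XY))
    (htau : ∀ w : List XY, tau (ofW w) = ofW ((w.map swapXY).reverse))
    -- the stuffle product * on ℌ¹: z_i w * z_j v =
    -- z_i(w * z_j v) + z_j(z_i w * v) + z_{i+j}(w * v)
    (st : MonoidAlgebra ℚ (FreeMonoid XY) →ₗ[ℚ]
        MonoidAlgebra ℚ (FreeMonoid XY) →ₗ[ℚ] MonoidAlgebra ℚ (FreeMonoid XY))
    (hst_one : ∀ t, st 1 t = t) (hst_one' : ∀ t, st t 1 = t)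
    (hst : ∀ (i j : ℕ+) (w v : List ℕ+),
      st (ofW (zWord (i :: w))) (ofW (zWord (j :: v))) =
        ofW (zWord [i]) * st (ofW (zWord w)) (ofW (zWord (j :: v)))
        + ofW (zWord [j]) * st (ofW (zWord (i :: w))) (ofW (zWord v))
        + ofW (zWord [i + j]) * st (ofW (zWord w)) (ofW (zWord v)))
    -- the generalized quasi-shuffle product ⧢_Sh associated to ⋄_Sh
    (sh : MonoidAlgebra ℚ (FreeMonoid XY) →ₗ[ℚ]
        MonoidAlgebra ℚ (FreeMonoid XY) →ₗ[ℚ] MonoidAlgebra ℚ (FreeMonoid XY))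
    (hsh_one : ∀ t, sh 1 t = t) (hsh_one' : ∀ t, sh t 1 = t)
    (hsh : ∀ (α β : XY) (w v : List XY),
      sh (ofW (α :: w)) (ofW (β :: v)) =
        ofW [α] * sh (ofW w) (ofW (β :: v))
        + ofW [β] * sh (ofW (α :: w)) (ofW v)
        + dSh α β * sh (ofW w) (ofW v)) :
    -- conclusion: τ(τ(w) * τ(v)) = w ⧢_Sh v for all w, v ∈ ℌ⁰
    ∀ w ∈ H0, ∀ v ∈ H0, tau (st (tau w) (tau v)) = sh w v := by
  have htau' (u : List XY) : tau (ofW u) = ofW (dualWord u) := htau u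
  have hZ (k : ℕ+) (l : List ℕ+) :
      dualWord (zWord (l ++ [k])) = dualWord (zWord [k]) ++ dualWord (zWord l) := by
    rw [zWord_append, dualWord_append]
  have key (a b : List ℕ+) : tau (st (ofW (zWord a)) (ofW (zWord b))) =
      sh (ofW (dualWord (zWord a))) (ofW (dualWord (zWord b))) := by
    have hnil : ofW (zWord []) = 1 := ofW_nil
    have hnil' : ofW (dualWord (zWord [])) = 1 := ofW_nil
    induction a using List.reverseRecOn generalizing b with
    | nil => rw [hnil, hnil', hst_one, hsh_one, htau']
    | append_singleton a i iha =>
      induction b using List.reverseRecOn with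
      | nil => rw [hnil, hnil', hst_one', hsh_one', htau']
      | append_singleton b j ihb =>
        rw [stuffle_concat st hst_one hst_one' hst, map_add, map_add]
        simp only [tau_mul_ofW tau htau']
        rw [iha, iha, ihb, hZ i a, hZ j b, sh_dual_block sh hsh_one hsh_one' hsh]
  intro w hw v hv
  induction hw using Submodule.span_induction with
  | mem w hw =>
    obtain ⟨l, hl, rfl⟩ := hw
    obtain ⟨a, ha⟩ := exists_dualWord_eq_zWord l hl
    induction hv using Submodule.span_induction with
    | mem v hv =>
      obtain ⟨m, hm, rfl⟩ := hv
      obtain ⟨b, hb⟩ := exists_dualWord_eq_zWord m hm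
      rw [htau', htau', ha, hb, key, ← ha, ← hb, dualWord_dualWord, dualWord_dualWord]
    | zero => simp
    | add v v' _ _ h h' => simp only [map_add, h, h']
    | smul r v _ h => simp only [map_smul, h]
  | zero => simp
  | add w w' _ _ h h' => simp only [map_add, LinearMap.add_apply, h, h']
  | smul r w _ h => simp only [map_smul, LinearMap.smul_apply, h]
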